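/- Let w : U → GL(n, ℝ) be smooth on a nonempty open set U ⊆ ℝ^n, with Γ and T defined from w as usual, and suppose there exist constants C^{(i)}_{(j)(k)} with ∑_{a,b,c} z^{(i)}_a(x) T^a_{bc}(x) w^b_{(j)}(x) w^c_{(k)}(x) = C^{(i)}_{(j)(k)} for all x ∈ U. Then the constants C^{(i)}_{(j)(k)} are the structure constants of a Lie algebra on ℝ^n: they are skew-symmetric in the lower indices, C^{(i)}_{(j)(k)} = −C^{(i)}_{(k)(j)}, and they satisfy the Jacobi identity ∑_a ( C^{(a)}_{(j)(k)} C^{(i)}_{(a)(l)} + C^{(a)}_{(k)(l)} C^{(i)}_{(a)(j)} + C^{(a)}_{(l)(j)} C^{(i)}_{(a)(k)} ) = 0 for all i, j, k, l. -/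

import Mathlib

open scoped BigOperators

/-- Partial derivative `∂f/∂x^k` of a scalar function on `ℝ^n`. -/
noncomputable def pd {n : ℕ} (f : (Fin n → ℝ) → ℝ) (x : Fin n → ℝ) (k : Fin n) : ℝ :=
  fderiv ℝ f x (Pi.single k (1 : ℝ))

/-- `Γ^i_{jk}(x) = ∑_a z^{(a)}_j(x) ∂w^i_{(a)}(x)/∂x^k`. -/
noncomputable def Gam {n : ℕ} (w z : (Fin n → ℝ) → Fin n → Fin n → ℝ)
    (x : Fin n → ℝ) (i j k : Fin n) : ℝ :=
  ∑ a, z x a j * pd (fun y => w y i a) x k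

/-- The integrability object `T^i_{jk} = Γ^i_{jk} − Γ^i_{kj}`. -/
noncomputable def Tor {n : ℕ} (w z : (Fin n → ℝ) → Fin n → Fin n → ℝ)
    (x : Fin n → ℝ) (i j k : Fin n) : ℝ :=
  Gam w z x i j k - Gam w z x i k j

/-! In the frame `X_j = ∑ i, w^i_{(j)} ∂_i`, contracting `T` with the frame in both lower slots
produces the Lie bracket `[X_k, X_j]`. Hence `C` constant means `[X_j, X_k] = -∑ i, C^i_{jk} X_i`
with constant coefficients, and skew-symmetry and the Jacobi identity pass from the Lie bracket of
vector fields to `-C`, because the `X_i` are pointwise linearly independent. -/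

open VectorField
open scoped Matrix Topology

section ConstantStructureFunctions

variable {𝕜 E ι : Type*} [NontriviallyNormedField 𝕜] [NormedAddCommGroup E] [NormedSpace 𝕜 E]
  {x : E}

lemma lieBracket_sum_const_smul_left {X : ι → E → E} {W : E → E} (s : Finset ι) (c : ι → 𝕜)
    (hX : ∀ i ∈ s, DifferentiableAt 𝕜 (X i) x) :
    lieBracket 𝕜 (fun y => ∑ i ∈ s, c i • X i y) W x =
      ∑ i ∈ s, c i • lieBracket 𝕜 (X i) W x := by
  have hfderiv : fderiv 𝕜 (fun y => ∑ i ∈ s, c i • X i y) x =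
      ∑ i ∈ s, c i • fderiv 𝕜 (X i) x := by
    rw [fderiv_fun_sum fun i hi => (hX i hi).fun_const_smul (c i)]
    exact Finset.sum_congr rfl fun i hi => fderiv_fun_const_smul (hX i hi) (c i)
  simp only [lieBracket, hfderiv, map_sum, map_smul, smul_sub, Finset.sum_sub_distrib,
    sum_apply, smul_apply]

lemma lieBracket_neg_left (V W : E → E) (x : E) :
    lieBracket 𝕜 (-V) W x = -lieBracket 𝕜 V W x := by
  simp only [lieBracket, Pi.neg_apply, fderiv_neg, neg_apply, map_neg, neg_sub_neg, neg_sub]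

lemma lieBracket_jacobi {r : WithTop ℕ∞} (hr : minSmoothness 𝕜 2 ≤ r) {U V W : E → E}
    (hU : ContDiffAt 𝕜 r U x) (hV : ContDiffAt 𝕜 r V x) (hW : ContDiffAt 𝕜 r W x) :
    lieBracket 𝕜 (lieBracket 𝕜 U V) W x + lieBracket 𝕜 (lieBracket 𝕜 V W) U x +
      lieBracket 𝕜 (lieBracket 𝕜 W U) V x = 0 := by
  have hUW : lieBracket 𝕜 U W = -lieBracket 𝕜 W U := funext fun _ => lieBracket_swap
  have hleibniz := leibniz_identity_lieBracket hr hU hV hW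
  rw [lieBracket_swap, lieBracket_swap (V := V) (W := lieBracket 𝕜 U W), hUW,
    lieBracket_neg_left, neg_neg] at hleibniz
  rw [add_right_comm, ← hleibniz, neg_add_cancel]

variable [Fintype ι] {X : ι → E → E} {c : ι → ι → ι → 𝕜}

lemma skew_of_lieBracket_eq_sum (hli : LinearIndependent 𝕜 fun i => X i x)
    (hc : ∀ j k, lieBracket 𝕜 (X j) (X k) x = ∑ i, c i j k • X i x) (i j k : ι) :
    c i j k = -c i k j := by
  refine Fintype.linearIndependent_iffₛ.1 hli (fun i => c i j k) (fun i => -c i k j) ?_ i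
  simp only [neg_smul, Finset.sum_neg_distrib, ← hc]
  exact lieBracket_swap

lemma lieBracket_lieBracket_eq_sum (hX : ∀ i, DifferentiableAt 𝕜 (X i) x)
    (hc : ∀ᶠ y in 𝓝 x, ∀ j k, lieBracket 𝕜 (X j) (X k) y = ∑ i, c i j k • X i y) (j k l : ι) :
    lieBracket 𝕜 (lieBracket 𝕜 (X j) (X k)) (X l) x =
      ∑ i, (∑ a, c a j k * c i a l) • X i x := by
  have hjk : lieBracket 𝕜 (X j) (X k) =ᶠ[𝓝 x] fun y => ∑ a, c a j k • X a y :=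
    hc.mono fun y hy => hy j k
  calc lieBracket 𝕜 (lieBracket 𝕜 (X j) (X k)) (X l) x
      = lieBracket 𝕜 (fun y => ∑ a, c a j k • X a y) (X l) x :=
        hjk.lieBracket_vectorField_eq .rfl
    _ = ∑ a, c a j k • lieBracket 𝕜 (X a) (X l) x :=
        lieBracket_sum_const_smul_left _ _ fun a _ => hX a
    _ = ∑ i, (∑ a, c a j k * c i a l) • X i x := by
        simp only [hc.self_of_nhds, Finset.smul_sum, Finset.sum_smul, mul_smul]
        exact Finset.sum_comm

lemma jacobi_of_lieBracket_eq_sum {r : WithTop ℕ∞} (hr : minSmoothness 𝕜 2 ≤ r)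
    (hX : ∀ i, ContDiffAt 𝕜 r (X i) x)
    (hli : LinearIndependent 𝕜 fun i => X i x)
    (hc : ∀ᶠ y in 𝓝 x, ∀ j k, lieBracket 𝕜 (X j) (X k) y = ∑ i, c i j k • X i y)
    (i j k l : ι) :
    ∑ a, (c a j k * c i a l + c a k l * c i a j + c a l j * c i a k) = 0 := by
  have hdiff i : DifferentiableAt 𝕜 (X i) x :=
    ((hX i).of_le (le_minSmoothness.trans hr)).differentiableAt two_ne_zero
  refine Fintype.linearIndependent_iff.1 hli
    (fun i => ∑ a, (c a j k * c i a l + c a k l * c i a j + c a l j * c i a k)) ?_ i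
  simpa only [lieBracket_lieBracket_eq_sum hdiff hc, ← Finset.sum_add_distrib, ← add_smul]
    using lieBracket_jacobi hr (hX j) (hX k) (hX l)

end ConstantStructureFunctions

section Frame

variable {n : ℕ} {w z : (Fin n → ℝ) → Fin n → Fin n → ℝ} {x : Fin n → ℝ}

/-- The `j`-th vector field `X_j = ∑ i, w^i_{(j)} ∂_i` of the framing `w`, that is, the `j`-th
column of the matrix field `w`. -/
def frameField (w : (Fin n → ℝ) → Fin n → Fin n → ℝ) (j : Fin n) (x : Fin n → ℝ) : Fin n → ℝ :=
  fun i => w x i j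

lemma fderiv_apply_eq_sum_pd (f : (Fin n → ℝ) → ℝ) (x v : Fin n → ℝ) :
    fderiv ℝ f x v = ∑ k, v k * pd f x k := by
  conv_lhs => rw [pi_eq_sum_univ' v, map_sum]
  simp only [map_smul, smul_eq_mul, pd]

lemma lieBracket_frameField_apply {j k : Fin n}
    (hj : DifferentiableAt ℝ (frameField w j) x) (hk : DifferentiableAt ℝ (frameField w k) x)
    (a : Fin n) :
    lieBracket ℝ (frameField w j) (frameField w k) x a =
      ∑ b, (w x b j * pd (fun y => w y a k) x b - w x b k * pd (fun y => w y a j) x b) := by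
  have hcomponent {l : Fin n} (hl : DifferentiableAt ℝ (frameField w l) x) (v : Fin n → ℝ) :
      fderiv ℝ (frameField w l) x v a = ∑ b, v b * pd (fun y => w y a l) x b := by
    rw [← fderiv_apply_eq_sum_pd]
    exact DFunLike.congr_fun (fderiv_apply hl a).symm v
  simp only [lieBracket, Pi.sub_apply, hcomponent hj, hcomponent hk, Finset.sum_sub_distrib,
    frameField]

lemma sum_gam_mul_eq_pd (hzw : Matrix.of (z x) * Matrix.of (w x) = 1) (a c j : Fin n) :
    ∑ b, Gam w z x a b c * w x b j = pd (fun y => w y a j) x c := by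
  let D : Fin n → ℝ := fun d => pd (fun y => w y a d) x c
  calc ∑ b, Gam w z x a b c * w x b j
      = ((D ᵥ* Matrix.of (z x)) ᵥ* Matrix.of (w x)) j := by
        simp only [Gam, D, Matrix.vecMul, dotProduct, Matrix.of_apply, mul_comm]
    _ = D j := by rw [Matrix.vecMul_vecMul, hzw, Matrix.vecMul_one]

lemma sum_tor_mul_mul_eq_lieBracket (hzw : Matrix.of (z x) * Matrix.of (w x) = 1)
    {j k : Fin n} (hj : DifferentiableAt ℝ (frameField w j) x)
    (hk : DifferentiableAt ℝ (frameField w k) x) (a : Fin n) :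
    ∑ b, ∑ c, Tor w z x a b c * w x b j * w x c k =
      lieBracket ℝ (frameField w k) (frameField w j) x a := by
  have hfirst : ∑ b, ∑ c, Gam w z x a b c * w x b j * w x c k =
      ∑ c, w x c k * pd (fun y => w y a j) x c := by
    rw [Finset.sum_comm]
    simp only [← Finset.sum_mul, sum_gam_mul_eq_pd hzw, mul_comm (w x _ k)]
  have hsecond : ∑ b, ∑ c, Gam w z x a c b * w x b j * w x c k =
      ∑ b, w x b j * pd (fun y => w y a k) x b := by
    simp only [mul_right_comm _ (w x _ j), ← Finset.sum_mul, sum_gam_mul_eq_pd hzw,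
      mul_comm (w x _ j)]
  simp only [lieBracket_frameField_apply hk hj, Tor, sub_mul, Finset.sum_sub_distrib, hfirst,
    hsecond]

lemma linearIndependent_frameField (hzw : Matrix.of (z x) * Matrix.of (w x) = 1) :
    LinearIndependent ℝ fun j => frameField w j x :=
  Matrix.linearIndependent_cols_of_isUnit (.of_mul_eq_one_right _ hzw)

lemma lieBracket_frameField_eq_sum (hzw : Matrix.of (z x) * Matrix.of (w x) = 1)
    (hw : ∀ j, DifferentiableAt ℝ (frameField w j) x) {C : Fin n → Fin n → Fin n → ℝ}
    (hC : ∀ i j k, ∑ a, ∑ b, ∑ c, z x i a * Tor w z x a b c * w x b j * w x c k = C i j k)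
    (j k : Fin n) :
    lieBracket ℝ (frameField w j) (frameField w k) x = ∑ i, -C i j k • frameField w i x := by
  let B := lieBracket ℝ (frameField w k) (frameField w j) x
  have hzB : Matrix.of (z x) *ᵥ B = fun i => C i j k := by
    ext i
    simp only [← hC, Matrix.mulVec, dotProduct, Matrix.of_apply, B, mul_assoc,
      ← sum_tor_mul_mul_eq_lieBracket hzw (hw j) (hw k), Finset.mul_sum]
  have hB : B = ∑ i, C i j k • frameField w i x := by
    calc B = Matrix.of (w x) *ᵥ (Matrix.of (z x) *ᵥ B) := by
          rw [Matrix.mulVec_mulVec, mul_eq_one_comm.1 hzw, Matrix.one_mulVec]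
      _ = ∑ i, C i j k • frameField w i x := by
          simp only [hzB, Matrix.mulVec_eq_sum, op_smul_eq_smul]
          rfl
  rw [lieBracket_swap]
  simp only [neg_smul, Finset.sum_neg_distrib, ← hB, B]

end Frame

theorem structure_constants_lie_algebra_general {n : ℕ}
    (U : Set (Fin n → ℝ)) (hU : IsOpen U) (hne : U.Nonempty)
    (w z : (Fin n → ℝ) → Fin n → Fin n → ℝ)
    (hw : ∀ i a : Fin n, ContDiffOn ℝ 2 (fun x => w x i a) U)
    (hzw : ∀ x ∈ U, ∀ i j : Fin n,
      ∑ a, z x i a * w x a j = (if i = j then (1 : ℝ) else 0))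
    (C : Fin n → Fin n → Fin n → ℝ)
    (hC : ∀ x ∈ U, ∀ i j k : Fin n,
      ∑ a, ∑ b, ∑ c, z x i a * Tor w z x a b c * w x b j * w x c k = C i j k) :
    (∀ i j k : Fin n, C i j k = -C i k j) ∧
    (∀ i j k l : Fin n,
      ∑ a, (C a j k * C i a l + C a k l * C i a j + C a l j * C i a k) = 0) := by
  obtain ⟨x₀, hx₀⟩ := hne
  have hsmooth x (hx : x ∈ U) j : ContDiffAt ℝ 2 (frameField w j) x :=
    contDiffAt_pi.2 fun i => (hw i j).contDiffAt (hU.mem_nhds hx)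
  have hinv x (hx : x ∈ U) : Matrix.of (z x) * Matrix.of (w x) = 1 := by
    ext i j
    simpa only [Matrix.mul_apply, Matrix.of_apply, Matrix.one_apply] using hzw x hx i j
  have hbracket x (hx : x ∈ U) := lieBracket_frameField_eq_sum (hinv x hx)
    (fun j => (hsmooth x hx j).differentiableAt two_ne_zero) (hC x hx)
  have hli := linearIndependent_frameField (hinv x₀ hx₀)
  constructor
  · intro i j k
    exact neg_injective (skew_of_lieBracket_eq_sum hli (hbracket x₀ hx₀) i j k)
  · intro i j k l
    simpa only [neg_mul_neg] using
      jacobi_of_lieBracket_eq_sum (r := 2) (by simp) (hsmooth x₀ hx₀) hli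
        (Filter.eventually_of_mem (hU.mem_nhds hx₀) hbracket) i j k l

/-- If the translated components of the integrability object `T` are constant
(equation (10), i.e. `𝔯 = 0`), then the constants `C^{(i)}_{(j)(k)}` are the
structure constants of a Lie algebra on `ℝ^n`: they are skew-symmetric in the
lower indices and satisfy the Jacobi identity. -/
theorem structure_constants_lie_algebra {n : ℕ} (hn : 1 ≤ n)
    (U : Set (Fin n → ℝ)) (hU : IsOpen U) (hne : U.Nonempty)
    (w z : (Fin n → ℝ) → Fin n → Fin n → ℝ)
    (hw : ∀ i a : Fin n, ContDiffOn ℝ (⊤ : ℕ∞) (fun x => w x i a) U)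
    (hwz : ∀ x ∈ U, ∀ i j : Fin n,
      ∑ a, w x i a * z x a j = (if i = j then (1 : ℝ) else 0))
    (hzw : ∀ x ∈ U, ∀ i j : Fin n,
      ∑ a, z x i a * w x a j = (if i = j then (1 : ℝ) else 0))
    (C : Fin n → Fin n → Fin n → ℝ)
    (hC : ∀ x ∈ U, ∀ i j k : Fin n,
      ∑ a, ∑ b, ∑ c, z x i a * Tor w z x a b c * w x b j * w x c k = C i j k) :
    (∀ i j k : Fin n, C i j k = -C i k j) ∧
    (∀ i j k l : Fin n,
      ∑ a, (C a j k * C i a l + C a k l * C i a j + C a l j * C i a k) = 0) :=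
  structure_constants_lie_algebra_general U hU hne w z
    (fun i a => (hw i a).of_le (by norm_cast)) hzw C hC
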